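/- Let N be a nonempty finite set, let p_data : N → ℝ be a probability distribution with p_data(x) > 0 for all x, and let 𝒢 be a nonempty compact convex set of probability distributions on N each of which is fully supported (p_G(x) > 0 for all x), with p_data ∉ 𝒢. Define V(p_G, D) = Σ_{x∈N} p_data(x)·log(D(x)) + Σ_{x∈N} p_G(x)·log(1 − D(x)) for D : N → (0,1). Then there exists G* ∈ 𝒢 minimizing the Jensen–Shannon divergence JSD(p_data‖·) over 𝒢, and for any such G*, setting D*(x) = p_data(x)/(p_data(x) + p_{G*}(x)) ∈ (0,1), the pair (G*, D*) is an equilibrium of the restricted game: V(G*, D) ≤ V(G*, D*) for every D : N → (0,1), and V(p_G, D*) ≥ V(G*, D*) for every p_G ∈ 𝒢. -/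

import Mathlib

open Finset

/-- The Jensen–Shannon divergence between two distributions on a finite set. -/
noncomputable def JSD {N : Type*} [Fintype N] (p q : N → ℝ) : ℝ :=
  1 / 2 * ∑ x, p x * Real.log (2 * p x / (p x + q x)) +
    1 / 2 * ∑ x, q x * Real.log (2 * q x / (p x + q x))

/-!
Against a generator `q`, the best discriminator is `D* = p / (p + q)` by Gibbs' inequality, and
the resulting value of the game is `2 * JSD p q` up to an additive constant. So minimizing `JSD p`
means minimizing the worst-case utility. For a payoff `f` that is convex in the minimizing variable,
with continuously varying best responses `b`, a minimizer `a` of `f z (b z)` forms a saddle point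
with `b a`: move from `a` slightly towards `x`, to `z`; since `f a (b z) ≤ f a (b a) ≤ f z (b z)`,
convexity gives `f a (b a) ≤ f x (b z)`, and `z → a` gives `f a (b a) ≤ f x (b a)`.
-/

section SaddlePoint

open Filter Topology

variable {E F : Type*} [AddCommGroup E] [Module ℝ E] {X : Set E} {Y : Set F} {f : E → F → ℝ}

lemma le_apply_bestResponse_of_isMinOn {b : E → F} {a x : E} {t : ℝ}
    (hconv : ∀ y ∈ Y, ConvexOn ℝ X (f · y)) (hbY : Set.MapsTo b X Y)
    (hbmax : IsMaxOn (f a) Y (b a)) (ha : a ∈ X)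
    (hmin : IsMinOn (fun z ↦ f z (b z)) X a) (hx : x ∈ X) (ht : t ∈ Set.Ioc (0 : ℝ) 1) :
    f a (b a) ≤ f x (b ((1 - t) • a + t • x)) := by
  obtain ⟨ht0, ht1⟩ := ht
  have ht1' : 0 ≤ 1 - t := sub_nonneg.2 ht1
  set z := (1 - t) • a + t • x
  have hzX : z ∈ X := (hconv _ (hbY ha)).1 ha hx ht1' ht0.le (sub_add_cancel 1 t)
  have hbz : b z ∈ Y := hbY hzX
  have hconv_z : f z (b z) ≤ (1 - t) * f a (b z) + t * f x (b z) :=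
    (hconv _ hbz).2 ha hx ht1' ht0.le (sub_add_cancel 1 t)
  have hmax : (1 - t) * f a (b z) ≤ (1 - t) * f a (b a) :=
    mul_le_mul_of_nonneg_left (hbmax hbz) ht1'
  have hmin_z : f a (b a) ≤ f z (b z) := hmin hzX
  exact le_of_mul_le_mul_left (by linarith) ht0

lemma isSaddlePointOn_of_isMinOn_bestResponse [TopologicalSpace E] [ContinuousAdd E]
    [ContinuousSMul ℝ E] {b : E → F} {a : E} (hconv : ∀ y ∈ Y, ConvexOn ℝ X (f · y))
    (hbY : Set.MapsTo b X Y) (hbmax : IsMaxOn (f a) Y (b a))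
    (hcont : ∀ x ∈ X, ContinuousWithinAt (fun z ↦ f x (b z)) X a) (ha : a ∈ X)
    (hmin : IsMinOn (fun z ↦ f z (b z)) X a) :
    IsSaddlePointOn X Y f a (b a) := by
  intro x hx y hy
  have hX : Convex ℝ X := (hconv _ (hbY ha)).1
  have hmem : ∀ᶠ t : ℝ in 𝓝[>] 0, t ∈ Set.Ioc (0 : ℝ) 1 := Ioc_mem_nhdsGT one_pos
  have hseg : Tendsto (fun t : ℝ ↦ (1 - t) • a + t • x) (𝓝[>] 0) (𝓝[X] a) := by
    refine tendsto_nhdsWithin_iff.2 ⟨?_, ?_⟩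
    · have : Continuous fun t : ℝ ↦ (1 - t) • a + t • x := by fun_prop
      simpa using (this.tendsto 0).mono_left nhdsWithin_le_nhds
    · filter_upwards [hmem] with t ht
      exact hX ha hx (sub_nonneg.2 ht.2) ht.1.le (sub_add_cancel 1 t)
  have hle : f a (b a) ≤ f x (b a) := by
    refine ge_of_tendsto ((hcont x hx).tendsto.comp hseg) ?_
    filter_upwards [hmem] with t ht
    exact le_apply_bestResponse_of_isMinOn hconv hbY hbmax ha hmin hx ht
  exact (hbmax hy).trans hle

end SaddlePoint

lemma mul_log_le_mul_log_div_add {a b s : ℝ} (ha : 0 < a) (hb : 0 < b) (hs : 0 < s) :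
    a * Real.log b ≤ a * Real.log (a / s) + (s * b - a) := by
  calc a * Real.log b = a * Real.log (a / s) + a * Real.log (b / (a / s)) := by
        rw [Real.log_div hb.ne' (by positivity)]
        ring
    _ ≤ a * Real.log (a / s) + a * (b / (a / s) - 1) := by
        gcongr
        exact Real.log_le_sub_one_of_pos (by positivity)
    _ = a * Real.log (a / s) + (s * b - a) := by field_simp

lemma mul_log_add_mul_log_one_sub_le {p q d : ℝ} (hp : 0 < p) (hq : 0 < q)
    (hd : d ∈ Set.Ioo (0 : ℝ) 1) :
    p * Real.log d + q * Real.log (1 - d) ≤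
      p * Real.log (p / (p + q)) + q * Real.log (q / (p + q)) := by
  have hp_le := mul_log_le_mul_log_div_add hp hd.1 (add_pos hp hq)
  have hq_le := mul_log_le_mul_log_div_add hq (sub_pos.2 hd.2) (add_pos hp hq)
  linarith

section GAN

variable {N : Type*} {p q : N → ℝ}

/-- The discriminator `D*(x) = p(x) / (p(x) + q(x))`, which maximizes the vanilla GAN utility when
the data distribution is `p` and the generator is `q`. -/
noncomputable def optimalDiscriminator (p q : N → ℝ) (x : N) : ℝ := p x / (p x + q x)

lemma optimalDiscriminator_mem_Ioo {x : N} (hp : 0 < p x) (hq : 0 < q x) :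
    optimalDiscriminator p q x ∈ Set.Ioo (0 : ℝ) 1 :=
  ⟨div_pos hp (add_pos hp hq), (div_lt_one (add_pos hp hq)).2 (lt_add_of_pos_right _ hq)⟩

lemma one_sub_optimalDiscriminator {x : N} (h : p x + q x ≠ 0) :
    1 - optimalDiscriminator p q x = q x / (p x + q x) := by
  rw [optimalDiscriminator, one_sub_div h, add_sub_cancel_left]

variable [Fintype N]

/-- The vanilla GAN utility `V(q, D)` of the generator `q` against the discriminator `D`, for the
data distribution `p`. The generator minimizes it and the discriminator maximizes it. -/
noncomputable def ganUtility (p q D : N → ℝ) : ℝ :=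
  ∑ x, p x * Real.log (D x) + ∑ x, q x * Real.log (1 - D x)

lemma isMaxOn_ganUtility_optimalDiscriminator (hp : ∀ x, 0 < p x) (hq : ∀ x, 0 < q x) :
    IsMaxOn (ganUtility p q) {D : N → ℝ | ∀ x, D x ∈ Set.Ioo 0 1}
      (optimalDiscriminator p q) := by
  intro D hD
  simp only [Set.mem_ofPred_eq, ganUtility, ← sum_add_distrib]
  refine sum_le_sum fun x _ ↦ ?_
  rw [one_sub_optimalDiscriminator (add_pos (hp x) (hq x)).ne']
  exact mul_log_add_mul_log_one_sub_le (hp x) (hq x) (hD x)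

lemma ganUtility_optimalDiscriminator (hp : ∀ x, 0 < p x) (hq : ∀ x, 0 < q x) :
    ganUtility p q (optimalDiscriminator p q) =
      2 * JSD p q - Real.log 2 * (∑ x, p x + ∑ x, q x) := by
  have hlog {a s : ℝ} (ha : 0 < a) (hs : 0 < s) :
      a * Real.log (2 * a / s) = Real.log 2 * a + a * Real.log (a / s) := by
    rw [mul_div_assoc, Real.log_mul two_ne_zero (by positivity)]
    ring
  have hpq x : 0 < p x + q x := add_pos (hp x) (hq x)
  simp only [ganUtility, one_sub_optimalDiscriminator (hpq _).ne']
  simp only [optimalDiscriminator, JSD, hlog (hp _) (hpq _), hlog (hq _) (hpq _), sum_add_distrib,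
    ← mul_sum]
  ring

lemma convexOn_ganUtility {𝒢 : Set (N → ℝ)} (h𝒢 : Convex ℝ 𝒢) (p D : N → ℝ) :
    ConvexOn ℝ 𝒢 (ganUtility p · D) :=
  (convexOn_const _ h𝒢).add
    ((Fintype.linearCombination ℝ fun x ↦ Real.log (1 - D x)).convexOn h𝒢)

lemma continuousOn_JSD (hp : ∀ x, 0 < p x) : ContinuousOn (JSD p) {q | ∀ x, 0 < q x} := by
  have hpq_ne x (q : N → ℝ) (hq : ∀ x, 0 < q x) : p x + q x ≠ 0 := (add_pos (hp x) (hq x)).ne'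
  have hp_ne x (q : N → ℝ) (hq : ∀ x, 0 < q x) : 2 * p x / (p x + q x) ≠ 0 :=
    div_ne_zero (mul_ne_zero two_ne_zero (hp x).ne') (hpq_ne x q hq)
  have hq_ne x (q : N → ℝ) (hq : ∀ x, 0 < q x) : 2 * q x / (p x + q x) ≠ 0 :=
    div_ne_zero (mul_ne_zero two_ne_zero (hq x).ne') (hpq_ne x q hq)
  refine .add (continuousOn_const.mul (continuousOn_finsetSum _ fun x _ ↦ ?_))
    (continuousOn_const.mul (continuousOn_finsetSum _ fun x _ ↦ ?_))
  · exact continuousOn_const.mul (.log (.div (by fun_prop) (by fun_prop) (hpq_ne x)) (hp_ne x))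
  · exact .mul (by fun_prop) (.log (.div (by fun_prop) (by fun_prop) (hpq_ne x)) (hq_ne x))

lemma continuousOn_ganUtility_optimalDiscriminator (hp : ∀ x, 0 < p x) (r : N → ℝ) :
    ContinuousOn (fun q ↦ ganUtility p r (optimalDiscriminator p q)) {q | ∀ x, 0 < q x} := by
  have hpq_ne x (q : N → ℝ) (hq : ∀ x, 0 < q x) : p x + q x ≠ 0 := (add_pos (hp x) (hq x)).ne'
  have hD x (q : N → ℝ) (hq : ∀ x, 0 < q x) : optimalDiscriminator p q x ∈ Set.Ioo (0 : ℝ) 1 :=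
    optimalDiscriminator_mem_Ioo (hp x) (hq x)
  have hcont x : ContinuousOn (fun q ↦ optimalDiscriminator p q x) {q | ∀ x, 0 < q x} :=
    continuousOn_const.div (by fun_prop) (hpq_ne x)
  exact .add
    (continuousOn_finsetSum _ fun x _ ↦
      continuousOn_const.mul ((hcont x).log fun q hq ↦ (hD x q hq).1.ne'))
    (continuousOn_finsetSum _ fun x _ ↦
      continuousOn_const.mul ((continuousOn_const.sub (hcont x)).log fun q hq ↦
        (sub_pos.2 (hD x q hq).2).ne'))

variable {𝒢 : Set (N → ℝ)}

lemma exists_isMinOn_JSD (hp : ∀ x, 0 < p x) (hne : 𝒢.Nonempty) (hcomp : IsCompact 𝒢)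
    (hpos : ∀ q ∈ 𝒢, ∀ x, 0 < q x) : ∃ q ∈ 𝒢, IsMinOn (JSD p) 𝒢 q :=
  hcomp.exists_isMinOn hne ((continuousOn_JSD hp).mono hpos)

lemma isMinOn_ganUtility_optimalDiscriminator {c : ℝ} (hp : ∀ x, 0 < p x)
    (hpos : ∀ q ∈ 𝒢, ∀ x, 0 < q x) (hmass : ∀ q ∈ 𝒢, ∑ x, q x = c) (hq : q ∈ 𝒢)
    (hmin : IsMinOn (JSD p) 𝒢 q) :
    IsMinOn (fun r ↦ ganUtility p r (optimalDiscriminator p r)) 𝒢 q := by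
  intro r hr
  have hJSD : JSD p q ≤ JSD p r := hmin hr
  simp only [Set.mem_ofPred_eq, ganUtility_optimalDiscriminator hp (hpos _ hq),
    ganUtility_optimalDiscriminator hp (hpos _ hr), hmass _ hq, hmass _ hr]
  linarith

lemma isSaddlePointOn_ganUtility_of_isMinOn_JSD {c : ℝ} (hp : ∀ x, 0 < p x)
    (hconv : Convex ℝ 𝒢) (hpos : ∀ q ∈ 𝒢, ∀ x, 0 < q x) (hmass : ∀ q ∈ 𝒢, ∑ x, q x = c)
    (hq : q ∈ 𝒢) (hmin : IsMinOn (JSD p) 𝒢 q) :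
    IsSaddlePointOn 𝒢 {D : N → ℝ | ∀ x, D x ∈ Set.Ioo 0 1} (ganUtility p) q
      (optimalDiscriminator p q) :=
  isSaddlePointOn_of_isMinOn_bestResponse (fun D _ ↦ convexOn_ganUtility hconv p D)
    (fun r hr x ↦ optimalDiscriminator_mem_Ioo (hp x) (hpos r hr x))
    (isMaxOn_ganUtility_optimalDiscriminator hp (hpos q hq))
    (fun r _ ↦ (continuousOn_ganUtility_optimalDiscriminator hp r).mono hpos q hq)
    hq (isMinOn_ganUtility_optimalDiscriminator hp hpos hmass hq hmin)

theorem vanilla_gan_nonrealizable_equilibrium_general {c : ℝ} (hp : ∀ x, 0 < p x)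
    (hne : 𝒢.Nonempty) (hcomp : IsCompact 𝒢) (hconv : Convex ℝ 𝒢)
    (hpos : ∀ q ∈ 𝒢, ∀ x, 0 < q x) (hmass : ∀ q ∈ 𝒢, ∑ x, q x = c) :
    (∃ q ∈ 𝒢, IsMinOn (JSD p) 𝒢 q) ∧
    ∀ q ∈ 𝒢, IsMinOn (JSD p) 𝒢 q →
      (∀ x, optimalDiscriminator p q x ∈ Set.Ioo (0 : ℝ) 1) ∧
      IsSaddlePointOn 𝒢 {D : N → ℝ | ∀ x, D x ∈ Set.Ioo 0 1} (ganUtility p) q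
        (optimalDiscriminator p q) :=
  ⟨exists_isMinOn_JSD hp hne hcomp hpos, fun q hq hmin ↦
    ⟨fun x ↦ optimalDiscriminator_mem_Ioo (hp x) (hpos q hq x),
      isSaddlePointOn_ganUtility_of_isMinOn_JSD hp hconv hpos hmass hq hmin⟩⟩

end GAN

/-- **Non-realizable vanilla GAN equilibrium:** over a compact convex family `𝒢` of
fully supported generator distributions not containing `p_data`, a minimizer `G*` of
`JSD(p_data‖·)` exists, and for any such minimizer the pair `(G*, D*)` with
`D*(x) = p_data(x)/(p_data(x) + p_{G*}(x))` is an equilibrium of the restricted game. -/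
theorem vanilla_gan_nonrealizable_equilibrium
    {N : Type*} [Fintype N] [Nonempty N]
    (pdata : N → ℝ) (hpdata : ∀ x, 0 < pdata x) (hsum : ∑ x, pdata x = 1)
    (𝒢 : Set (N → ℝ)) (hne : 𝒢.Nonempty) (hcomp : IsCompact 𝒢) (hconv : Convex ℝ 𝒢)
    (hprob : ∀ pG ∈ 𝒢, (∀ x, 0 < pG x) ∧ ∑ x, pG x = 1)
    (hnotin : pdata ∉ 𝒢) :
    (∃ Gstar ∈ 𝒢, ∀ G ∈ 𝒢, JSD pdata Gstar ≤ JSD pdata G) ∧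
    ∀ Gstar ∈ 𝒢, (∀ G ∈ 𝒢, JSD pdata Gstar ≤ JSD pdata G) →
      (∀ x, pdata x / (pdata x + Gstar x) ∈ Set.Ioo (0:ℝ) 1) ∧
      (∀ D : N → ℝ, (∀ x, D x ∈ Set.Ioo (0:ℝ) 1) →
        ∑ x, pdata x * Real.log (D x) + ∑ x, Gstar x * Real.log (1 - D x) ≤
          ∑ x, pdata x * Real.log (pdata x / (pdata x + Gstar x)) +
            ∑ x, Gstar x * Real.log (1 - pdata x / (pdata x + Gstar x))) ∧
      (∀ pG ∈ 𝒢,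
        ∑ x, pdata x * Real.log (pdata x / (pdata x + Gstar x)) +
            ∑ x, Gstar x * Real.log (1 - pdata x / (pdata x + Gstar x)) ≤
          ∑ x, pdata x * Real.log (pdata x / (pdata x + Gstar x)) +
            ∑ x, pG x * Real.log (1 - pdata x / (pdata x + Gstar x))) := by
  obtain ⟨hexists, hsaddle⟩ := vanilla_gan_nonrealizable_equilibrium_general hpdata hne hcomp hconv
    (fun q hq ↦ (hprob q hq).1) (fun q hq ↦ (hprob q hq).2)
  exact ⟨hexists, fun G hG hmin ↦ have ⟨hD, hle⟩ := hsaddle G hG hmin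
    ⟨hD, fun D hD' ↦ hle G hG D hD', fun pG hpG ↦ hle pG hpG _ hD⟩⟩
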